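/- Let U be a bounded open set in ℝ^d with closure U̅, and let C(U̅) be the Banach space of continuous real-valued functions on U̅ with the supremum norm. Then the set of functions f ∈ C(U̅) whose restriction to U is strongly nowhere differentiable contains a G_δ subset that is dense in C(U̅). -/

import Mathlib

open Set Filter Topology

/-- A test curve in `ℝ^d`: a `C¹` curve `c : [a,b] → ℝ^d` (with `a < b`) of unit speed
whose derivative is `γ`-Hölder for some `γ ∈ (0,1]`. -/
def IsTestCurve {d : ℕ} (a b : ℝ) (c : ℝ → EuclideanSpace ℝ (Fin d)) : Prop :=
  a < b ∧ ContDiffOn ℝ 1 c (Icc a b) ∧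
    (∀ s ∈ Icc a b, ‖derivWithin c (Icc a b) s‖ = 1) ∧
    ∃ γ ∈ Ioc (0 : ℝ) 1, ∃ ρ : ℝ, 0 ≤ ρ ∧
      ∀ s₁ ∈ Icc a b, ∀ s₂ ∈ Icc a b,
        ‖derivWithin c (Icc a b) s₂ - derivWithin c (Icc a b) s₁‖ ≤ ρ * |s₂ - s₁| ^ γ

/-- `f` is strongly nowhere differentiable on `U`: for every test curve with image in `U`,
the composition `f ∘ c` is differentiable at no point of `(a,b)`. -/
def StronglyNowhereDiffOn {d : ℕ} (f : EuclideanSpace ℝ (Fin d) → ℝ)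
    (U : Set (EuclideanSpace ℝ (Fin d))) : Prop :=
  ∀ (a b : ℝ) (c : ℝ → EuclideanSpace ℝ (Fin d)), IsTestCurve a b c →
    (∀ s ∈ Icc a b, c s ∈ U) →
    ∀ s₀ ∈ Ioo a b, ¬ DifferentiableWithinAt ℝ (f ∘ c) (Icc a b) s₀

open Classical in
/-- Extend a continuous function on `closure U` to all of `ℝ^d` by zero. -/
noncomputable def extendCl {d : ℕ} (U : Set (EuclideanSpace ℝ (Fin d)))
    (f : C(closure U, ℝ)) : EuclideanSpace ℝ (Fin d) → ℝ :=
  fun x => if hx : x ∈ closure U then f ⟨x, hx⟩ else 0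

/-- Functions that, uniformly in `x`, vary by more than `n * t` between `x` and the points of the
cone `‖y - x‖ ≤ n * t`, `y i = x i + t`, for some scale `0 < t ≤ 1 / n`. -/
def coneOscillating {d : ℕ} (K : Set (EuclideanSpace ℝ (Fin d))) (n : ℝ) (i : Fin d) :
    Set C(K, ℝ) :=
  {f | ∃ δ > 0, ∀ x : K, ∃ t > 0, n * t ≤ 1 ∧ ∀ y : K, y.1 i = x.1 i + t →
    ‖y.1 - x.1‖ ≤ n * t → n * t + δ ≤ |f y - f x|}

theorem isOpen_coneOscillating {d : ℕ} (K : Set (EuclideanSpace ℝ (Fin d))) [CompactSpace K]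
    (n : ℝ) (i : Fin d) : IsOpen (coneOscillating K n i) := by
  rw [Metric.isOpen_iff]
  rintro f ⟨δ, hδ, hf⟩
  refine ⟨δ / 4, by positivity, fun g hg => ⟨δ / 2, by positivity, fun x => ?_⟩⟩
  obtain ⟨t, ht, hnt, hy⟩ := hf x
  refine ⟨t, ht, hnt, fun y hyi hyx => ?_⟩
  have h := hy y hyi hyx
  have hclose : ∀ z, |f z - g z| ≤ δ / 4 := fun z => by
    rw [← Real.dist_eq, dist_comm]
    exact (ContinuousMap.dist_apply_le_dist z).trans (Metric.mem_ball.1 hg).le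
  have hx := abs_le.1 (hclose x)
  have hy' := abs_le.1 (hclose y)
  rcases le_abs.1 h with h | h
  · exact le_abs.2 (Or.inl (by linarith))
  · exact le_abs.2 (Or.inr (by linarith))

theorem exists_quarter_le_abs_sin_add_sub_sin (θ : ℝ) :
    ∃ u ∈ Ioc 0 Real.pi, 1 / 4 ≤ |Real.sin (θ + u) - Real.sin θ| := by
  have hpi := Real.pi_pos
  by_contra! H
  have h₁ := abs_lt.1 (H Real.pi ⟨hpi, le_rfl⟩)
  have h₂ := abs_lt.1 (H (Real.pi / 2) ⟨by positivity, by linarith⟩)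
  rw [Real.sin_add_pi] at h₁
  rw [Real.sin_add_pi_div_two] at h₂
  nlinarith [Real.sin_sq_add_cos_sq θ]

theorem dense_coneOscillating {d : ℕ} (K : Set (EuclideanSpace ℝ (Fin d))) [CompactSpace K]
    {n : ℝ} (hn : 0 < n) (i : Fin d) : Dense (coneOscillating K n i) := by
  rw [Metric.dense_iff]
  intro f ε hε
  have huc : UniformContinuous f := CompactSpace.uniformContinuous_of_continuous f.continuous
  obtain ⟨r, hr, hfr⟩ := Metric.uniformContinuous_iff.1 huc (ε / 64) (by positivity)
  obtain ⟨q, hq, hqr⟩ : ∃ q > 0, q < r ∧ q ≤ ε / 64 ∧ q ≤ 1 :=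
    ⟨min (r / 2) (min (ε / 64) 1), by positivity,
      (min_le_left _ _).trans_lt (by linarith),
      (min_le_right _ _).trans (min_le_left _ _), (min_le_right _ _).trans (min_le_right _ _)⟩
  have hpi := Real.pi_pos
  set M : ℝ := n * Real.pi / q with hM
  have hMpos : 0 < M := by positivity
  let w : C(K, ℝ) := ⟨fun x => ε / 4 * Real.sin (M * x.1 i), by fun_prop⟩
  refine ⟨f + w, ?_, ε / 32, by positivity, fun x => ?_⟩
  · rw [Metric.mem_ball, dist_eq_norm, add_sub_cancel_left]
    refine lt_of_le_of_lt ((ContinuousMap.norm_le w (by positivity : 0 ≤ ε / 4)).2 fun x => ?_)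
      (by linarith : ε / 4 < ε)
    change ‖ε / 4 * Real.sin (M * x.1 i)‖ ≤ ε / 4
    rw [norm_mul, Real.norm_of_nonneg (by positivity), Real.norm_eq_abs]
    exact mul_le_of_le_one_right (by positivity) (Real.abs_sin_le_one _)
  · obtain ⟨u, ⟨hu, hupi⟩, hosc⟩ := exists_quarter_le_abs_sin_add_sub_sin (M * x.1 i)
    have hnt : n * (u / M) ≤ q := by
      have : n * (u / M) = q * (u / Real.pi) := by rw [hM]; field_simp
      rw [this]
      exact mul_le_of_le_one_right hq.le ((div_le_one hpi).2 hupi)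
    refine ⟨u / M, by positivity, hnt.trans hqr.2.2, fun y hyi hyx => ?_⟩
    have hfxy : |f y - f x| < ε / 64 := by
      rw [← Real.dist_eq]
      refine hfr ?_
      rw [Subtype.dist_eq, dist_eq_norm]
      linarith
    have hwxy : ε / 16 ≤ |w y - w x| := by
      have : w y - w x = ε / 4 * (Real.sin (M * x.1 i + u) - Real.sin (M * x.1 i)) := by
        change ε / 4 * Real.sin (M * y.1 i) - ε / 4 * Real.sin (M * x.1 i) = _
        rw [hyi, mul_add, mul_div_cancel₀ u hMpos.ne']
        ring
      rw [this, abs_mul, abs_of_pos (by positivity : 0 < ε / 4)]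
      nlinarith
    have htri := abs_sub_abs_le_abs_sub (w y - w x) (-(f y - f x))
    rw [abs_neg] at htri
    have hsum : (f + w) y - (f + w) x = w y - w x - -(f y - f x) := by
      simp only [ContinuousMap.add_apply]
      ring
    rw [hsum]
    linarith [hqr.2.1]

/-- Near a point where its derivative is nonzero, a function takes all slightly larger values, at
distances comparable to the increment. -/
theorem HasDerivAt.exists_eq_add_of_ne_zero {u : ℝ → ℝ} {v s₀ η : ℝ} (hu : HasDerivAt u v s₀)
    (hv : v ≠ 0) (hη : 0 < η) (hcont : ContinuousOn u (Metric.closedBall s₀ η)) :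
    ∃ τ > 0, ∀ t ∈ Ioc 0 τ, ∃ s, |s - s₀| ≤ η ∧ |s - s₀| ≤ 2 / |v| * t ∧ u s = u s₀ + t := by
  have hv' : 0 < |v| := abs_pos.2 hv
  have hlin := (hasDerivAt_iff_isLittleO.1 hu).def (half_pos hv')
  obtain ⟨r, hr, hball⟩ := Metric.eventually_nhds_iff_ball.1 hlin
  obtain ⟨q, hq, hqη, hqr⟩ : ∃ q > 0, q ≤ η ∧ q < r :=
    ⟨min η (r / 2), by positivity, min_le_left _ _, (min_le_right _ _).trans_lt (by linarith)⟩
  have happrox : ∀ s, |s - s₀| ≤ q → |u s - u s₀ - (s - s₀) * v| ≤ |v| / 2 * |s - s₀| := by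
    intro s hs
    simpa using hball s (by rw [Metric.mem_ball, Real.dist_eq]; linarith)
  obtain ⟨s₁, hs₁, hs₁v⟩ : ∃ s₁, |s₁ - s₀| = q ∧ (s₁ - s₀) * v = q * |v| := by
    rcases abs_cases v with ⟨h, -⟩ | ⟨h, -⟩
    · exact ⟨s₀ + q, by simp [abs_of_pos hq], by rw [h]; ring⟩
    · exact ⟨s₀ - q, by simp [abs_of_pos hq], by rw [h]; ring⟩
  have hinc : u s₀ + |v| / 2 * q ≤ u s₁ := by
    have h := happrox s₁ hs₁.le
    rw [hs₁, hs₁v] at h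
    linarith [(abs_le.1 h).1]
  have hseg : ∀ s ∈ uIcc s₀ s₁, |s - s₀| ≤ q := fun s hs =>
    (abs_sub_left_of_mem_uIcc hs).trans_eq hs₁
  refine ⟨|v| / 2 * q, by positivity, fun t ht => ?_⟩
  have hcont' : ContinuousOn u (uIcc s₀ s₁) := hcont.mono fun s hs => by
    rw [Metric.mem_closedBall, Real.dist_eq]
    exact (hseg s hs).trans hqη
  obtain ⟨s, hs, hst⟩ := intermediate_value_uIcc hcont'
    (show u s₀ + t ∈ uIcc (u s₀) (u s₁) from
      Icc_subset_uIcc ⟨by linarith [ht.1], by linarith [ht.2]⟩)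
  refine ⟨s, (hseg s hs).trans hqη, ?_, hst⟩
  have h := happrox s (hseg s hs)
  rw [hst, add_sub_cancel_left] at h
  have h' := (abs_sub_abs_le_abs_sub ((s - s₀) * v) t).trans_eq (abs_sub_comm _ _)
  rw [abs_mul, abs_of_pos ht.1] at h'
  rw [div_mul_eq_mul_div, le_div_iff₀ hv']
  linarith

theorem stronglyNowhereDiffOn_of_coneOscillating {d : ℕ} {U : Set (EuclideanSpace ℝ (Fin d))}
    {f : C(closure U, ℝ)}
    (hf : ∀ (n : ℕ) (i : Fin d), f ∈ coneOscillating (closure U) ((n : ℝ) + 1) i) :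
    StronglyNowhereDiffOn (extendCl U f) U := by
  rintro a b c ⟨-, hc, hspeed, -⟩ hcU s₀ hs₀ hdiff
  have hnhds : Icc a b ∈ 𝓝 s₀ := Icc_mem_nhds hs₀.1 hs₀.2
  have hs₀' : s₀ ∈ Icc a b := Ioo_subset_Icc_self hs₀
  have hcder : HasDerivAt c (derivWithin c (Icc a b) s₀) s₀ :=
    ((hc.differentiableOn one_ne_zero s₀ hs₀').hasDerivWithinAt).hasDerivAt hnhds
  obtain ⟨i, hi⟩ : ∃ i, derivWithin c (Icc a b) s₀ i ≠ 0 := by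
    by_contra! H
    have h0 : derivWithin c (Icc a b) s₀ = 0 := by
      ext i
      exact H i
    simpa [h0] using hspeed s₀ hs₀'
  have hider : HasDerivAt (fun s => c s i) (derivWithin c (Icc a b) s₀ i) s₀ :=
    (EuclideanSpace.proj (𝕜 := ℝ) i).hasFDerivAt.comp_hasDerivAt s₀ hcder
  obtain ⟨C₁, hC₁, hcO⟩ := hcder.differentiableAt.isBigO_sub.exists_pos
  obtain ⟨C₂, hC₂, hfO⟩ := (hdiff.differentiableAt hnhds).isBigO_sub.exists_pos
  obtain ⟨η, hη, hball⟩ := Metric.nhds_basis_closedBall.eventually_iff.1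
    ((hcO.bound.and hfO.bound).and hnhds)
  have hcont : ContinuousOn (fun s => c s i) (Metric.closedBall s₀ η) :=
    (EuclideanSpace.proj (𝕜 := ℝ) i).continuous.comp_continuousOn
      (hc.continuousOn.mono fun s hs => (hball hs).2)
  obtain ⟨τ, hτ, hsol⟩ := hider.exists_eq_add_of_ne_zero hi hη hcont
  set κ := 2 / |derivWithin c (Icc a b) s₀ i|
  have hκpos : 0 < κ := div_pos two_pos (abs_pos.2 hi)
  obtain ⟨n, hn⟩ := exists_nat_ge (max (τ⁻¹) (max (C₁ * κ) (C₂ * κ)))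
  have hnτ : τ⁻¹ ≤ n := (le_max_left _ _).trans hn
  have hn₁ : C₁ * κ ≤ n := ((le_max_left _ _).trans (le_max_right _ _)).trans hn
  have hn₂ : C₂ * κ ≤ n := ((le_max_right _ _).trans (le_max_right _ _)).trans hn
  obtain ⟨δ, hδ, hosc⟩ := hf n i
  obtain ⟨t, ht, hnt, hcone⟩ := hosc ⟨c s₀, subset_closure (hcU s₀ hs₀')⟩
  have htτ : t ≤ τ := by
    have h : τ⁻¹ * t ≤ 1 := (mul_le_mul_of_nonneg_right (by linarith) ht.le).trans hnt
    rwa [inv_mul_le_iff₀ hτ, mul_one] at h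
  obtain ⟨s, hsη, hst, hsi⟩ := hsol t ⟨ht, htτ⟩
  obtain ⟨⟨hcs, hfs⟩, hsI⟩ := hball (show s ∈ Metric.closedBall s₀ η from hsη)
  have hbound : ∀ C, 0 < C → C * κ ≤ n → C * ‖s - s₀‖ ≤ ((n : ℝ) + 1) * t := by
    intro C hC hCn
    rw [Real.norm_eq_abs]
    calc C * |s - s₀| ≤ C * (κ * t) := by gcongr
      _ = C * κ * t := by ring
      _ ≤ ((n : ℝ) + 1) * t := by gcongr; linarith
  have hext : ∀ r (hr : r ∈ Icc a b),
      (extendCl U f ∘ c) r = f ⟨c r, subset_closure (hcU r hr)⟩ := fun r hr => by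
    simp [extendCl, subset_closure (hcU r hr)]
  have hlarge := hcone ⟨c s, subset_closure (hcU s hsI)⟩ hsi (hcs.trans (hbound C₁ hC₁ hn₁))
  rw [hext s hsI, hext s₀ hs₀', Real.norm_eq_abs] at hfs
  linarith [hbound C₂ hC₂ hn₂]

/-- Main theorem: for a bounded open `U ⊆ ℝ^d`, the set of `f ∈ C(U̅)` whose restriction to
`U` is strongly nowhere differentiable contains a dense `G_δ` subset of `C(U̅)`. -/
theorem dense_Gδ_stronglyNowhereDiff {d : ℕ} (U : Set (EuclideanSpace ℝ (Fin d)))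
    (hU : IsOpen U) (hUb : Bornology.IsBounded U) :
    ∃ G : Set C(closure U, ℝ), IsGδ G ∧ Dense G ∧
      ∀ f ∈ G, StronglyNowhereDiffOn (extendCl U f) U := by
  have : CompactSpace (closure U) := isCompact_iff_compactSpace.1 hUb.isCompact_closure
  have hopen : ∀ p : ℕ × Fin d, IsOpen (coneOscillating (closure U) ((p.1 : ℝ) + 1) p.2) :=
    fun p => isOpen_coneOscillating _ _ _
  refine ⟨⋂ p : ℕ × Fin d, coneOscillating (closure U) ((p.1 : ℝ) + 1) p.2,
    IsGδ.iInter_of_isOpen hopen,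
    dense_iInter_of_isOpen hopen fun p => dense_coneOscillating _ (by positivity) _,
    fun f hf => stronglyNowhereDiffOn_of_coneOscillating fun n i => mem_iInter.1 hf (n, i)⟩
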